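/- There exist sequences of nonnegative integrable functions f_n, g_n on the circle with integrable logarithms such that ‖f_n‖_{L¹}, ‖g_n‖_{L¹} ≤ 1, ‖g_n − f_n‖_{L¹} ≤ 1/n, ‖log g_n − log f_n‖_{L¹} ≤ 1/n, yet ‖g_n⁺ − f_n⁺‖_{H²} ≥ 2 − 1/n. In particular, there is no modulus of continuity Π : [0,∞)² → [0,∞) with Π(s,t) → 0 as (s,t) → (0,0) such that ‖g⁺ − f⁺‖²_{H²} ≤ Π(‖g − f‖_{L¹}, ‖log g − log f‖_{L¹}) holds for all densities f, g with L¹ norm at most 1. -/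

import Mathlib

open MeasureTheory Set Filter

/-- The canonical outer spectral factor
`f⁺(z) = exp((1/4π) ∫₀^{2π} ((e^{iθ}+z)/(e^{iθ}−z)) log f(e^{iθ}) dθ)`. -/
noncomputable def spectralFactor (f : ℝ → ℝ) (z : ℂ) : ℂ :=
  Complex.exp ((1 / (4 * Real.pi) : ℂ) *
    ∫ θ in (0 : ℝ)..(2 * Real.pi),
      ((Complex.exp ((θ : ℂ) * Complex.I) + z) /
        (Complex.exp ((θ : ℂ) * Complex.I) - z)) * (Real.log (f θ) : ℂ))

/-- The squared `H²` distance of two analytic functions on the disk,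
`‖F − G‖²_{H²} = sup_{0 ≤ r < 1} ∫₀^{2π} |F(re^{iθ}) − G(re^{iθ})|² dθ`. -/
noncomputable def H2distSq (F G : ℂ → ℂ) : ℝ :=
  sSup {x : ℝ | ∃ r ∈ Ico (0 : ℝ) 1,
    x = ∫ θ in (0 : ℝ)..(2 * Real.pi),
      ‖F ((r : ℂ) * Complex.exp ((θ : ℂ) * Complex.I)) -
        G ((r : ℂ) * Complex.exp ((θ : ℂ) * Complex.I))‖ ^ 2}

open Metric Topology ComplexConjugate

/-- The **Schwarz integral formula** on the unit disk: a holomorphic function is recovered from the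
boundary values of its real part, up to the imaginary part of its value at the origin. -/
theorem DiffContOnCl.circleAverage_schwarz {u : ℂ → ℂ} (hu : DiffContOnCl ℂ u (ball 0 1))
    {w : ℂ} (hw : w ∈ ball (0 : ℂ) 1) :
    Real.circleAverage (fun z => (z + w) / (z - w) * (2 * (u z).re : ℝ)) 0 1 =
      2 * u w - u 0 + conj (u 0) := by
  have hw1 : ‖w‖ < 1 := by simpa using hw
  have hden : ∀ z ∈ closure (ball (0 : ℂ) 1), 1 - conj w * z ≠ 0 := by
    intro z hz h
    rw [closure_ball _ one_ne_zero, mem_closedBall_zero_iff] at hz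
    have h1 : ‖conj w * z‖ = 1 := by rw [← sub_eq_zero.1 h, norm_one]
    rw [norm_mul, RCLike.norm_conj] at h1
    nlinarith [norm_nonneg w, norm_nonneg z]
  have hnum : DiffContOnCl ℂ (fun z => 1 + conj w * z) (ball 0 1) :=
    (show Differentiable ℂ fun z : ℂ => 1 + conj w * z by fun_prop).diffContOnCl
  have hden' : DiffContOnCl ℂ (fun z => 1 - conj w * z) (ball 0 1) :=
    (show Differentiable ℂ fun z : ℂ => 1 - conj w * z by fun_prop).diffContOnCl
  have hq : DiffContOnCl ℂ (fun z => (1 - conj w * z)⁻¹ • ((1 + conj w * z) • u z)) (ball 0 1) :=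
    (hden'.inv hden).smul (hnum.smul hu)
  have hsub : sphere (0 : ℂ) |1| ⊆ closure (ball (0 : ℂ) 1) := by
    rw [abs_one, closure_ball _ one_ne_zero]; exact sphere_subset_closedBall
  have huc : ContinuousOn u (sphere 0 |1|) := hu.continuousOn.mono hsub
  have hqc := hq.continuousOn.mono hsub
  have hzw : ∀ z ∈ sphere (0 : ℂ) |1|, z - w ≠ 0 := by
    intro z hz h
    rw [sub_eq_zero] at h
    simp [h] at hz
    linarith
  have hkc : ContinuousOn (fun z => ((z - 0) / (z - w)) • u z) (sphere 0 |1|) :=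
    (ContinuousOn.div (by fun_prop) (by fun_prop) hzw).smul huc
  have e1 := DiffContOnCl.circleAverage_smul_div (R := 1) (by simpa using hu) (by simpa using hw)
  have e2 := DiffContOnCl.circleAverage (R := 1) (by simpa using hu)
  have e3 := DiffContOnCl.circleAverage (R := 1) (by simpa using hq)
  have e3' : Real.circleAverage
      (fun z => conj ((1 - conj w * z)⁻¹ • ((1 + conj w * z) • u z))) 0 1 = conj (u 0) := by
    have := Complex.conjCLE.toContinuousLinearMap.circleAverage_comp_comm hqc.circleIntegrable'
    simp only [smul_eq_mul] at this ⊢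
    rw [e3] at this
    simpa [Function.comp_def] using this
  have hcc : ContinuousOn
      (fun z => conj ((1 - conj w * z)⁻¹ • ((1 + conj w * z) • u z))) (sphere 0 |1|) :=
    Complex.continuous_conj.comp_continuousOn hqc
  have key : Real.circleAverage (fun z => (z + w) / (z - w) * (2 * (u z).re : ℝ)) 0 1 =
      Real.circleAverage (((2 : ℂ) • (fun z => ((z - 0) / (z - w)) • u z) - u) +
        fun z => conj ((1 - conj w * z)⁻¹ • ((1 + conj w * z) • u z))) 0 1 := by
    refine Real.circleAverage_congr_sphere fun z hz => ?_
    have hz1 : z * conj z = 1 := by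
      have : ‖z‖ = 1 := by simpa using hz
      rw [Complex.mul_conj, Complex.normSq_eq_norm_sq, this]; norm_num
    have hz0 : conj z ≠ 0 := right_ne_zero_of_mul_eq_one hz1
    have hd := hzw z hz
    have hfac : 1 - w * conj z = conj z * (z - w) := by linear_combination -hz1
    have hfac' : 1 + w * conj z = conj z * (z + w) := by linear_combination -hz1
    simp only [Pi.add_apply, Pi.sub_apply, Pi.smul_apply, smul_eq_mul, map_mul, map_inv₀, map_sub,
      map_add, map_one, Complex.conj_conj, sub_zero]
    rw [hfac, hfac', Complex.ofReal_mul, Complex.re_eq_add_conj]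
    field_simp
    push_cast
    ring
  rw [key, Real.circleAverage_add _ hcc.circleIntegrable',
    Real.circleAverage_sub _ huc.circleIntegrable', Real.circleAverage_smul, e1, e2, e3', smul_eq_mul]
  · exact (hkc.const_smul (2 : ℂ)).circleIntegrable'
  · exact ((hkc.const_smul (2 : ℂ)).sub huc).circleIntegrable'

/-- If `u` is holomorphic on the disk, continuous up to the boundary and real at the origin, then
`exp u` is the spectral factor of `|exp u|²`. -/
theorem spectralFactor_exp_re {u : ℂ → ℂ} (hu : DiffContOnCl ℂ u (ball 0 1)) (h0 : (u 0).im = 0)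
    {w : ℂ} (hw : w ∈ ball (0 : ℂ) 1) :
    spectralFactor (fun θ => Real.exp (2 * (u (Complex.exp (θ * Complex.I))).re)) w =
      Complex.exp (u w) := by
  have h := hu.circleAverage_schwarz hw
  have hconj : conj (u 0) = u 0 := Complex.conj_eq_iff_im.2 h0
  rw [hconj, sub_add_cancel, Real.circleAverage] at h
  simp only [circleMap, Complex.ofReal_one, one_mul, zero_add] at h
  simp only [spectralFactor, Real.log_exp]
  congr 1
  rw [Complex.real_smul] at h
  push_cast at h ⊢
  linear_combination h / 2

/-- The boundary `L²` distance is a lower bound for the `H²` distance of functions that extend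
continuously to the closed disk. -/
theorem le_H2distSq {F G A B : ℂ → ℂ} (hA : ContinuousOn A (closedBall 0 1))
    (hB : ContinuousOn B (closedBall 0 1)) (hF : EqOn F A (ball 0 1)) (hG : EqOn G B (ball 0 1)) :
    ∫ θ in (0 : ℝ)..(2 * Real.pi),
      ‖A (Complex.exp ((θ : ℂ) * Complex.I)) - B (Complex.exp ((θ : ℂ) * Complex.I))‖ ^ 2 ≤
        H2distSq F G := by
  set p : ℝ → ℝ → ℂ := fun r θ =>
    ((max 0 (min r 1) : ℝ) : ℂ) * Complex.exp ((θ : ℂ) * Complex.I) with hp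
  have hpmem : ∀ r θ, p r θ ∈ closedBall (0 : ℂ) 1 := by
    intro r θ
    simp [hp, abs_of_nonneg (le_max_left (0 : ℝ) _)]
  have hpc : Continuous (Function.uncurry p) := by
    simp only [hp, Function.uncurry_def]; fun_prop
  have hAc : Continuous (fun x => A (Function.uncurry p x)) :=
    hA.comp_continuous hpc fun x => hpmem x.1 x.2
  have hBc : Continuous (fun x => B (Function.uncurry p x)) :=
    hB.comp_continuous hpc fun x => hpmem x.1 x.2
  set Φ : ℝ → ℝ := fun r => ∫ θ in (0 : ℝ)..(2 * Real.pi), ‖A (p r θ) - B (p r θ)‖ ^ 2 with hΦ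
  have hΦc : Continuous Φ := by
    refine intervalIntegral.continuous_parametric_intervalIntegral_of_continuous'
      (f := fun r θ => ‖A (p r θ) - B (p r θ)‖ ^ 2) ?_ _ _
    exact (hAc.sub hBc).norm.pow 2
  have hset : {x : ℝ | ∃ r ∈ Ico (0 : ℝ) 1,
      x = ∫ θ in (0 : ℝ)..(2 * Real.pi),
        ‖F ((r : ℂ) * Complex.exp ((θ : ℂ) * Complex.I)) -
          G ((r : ℂ) * Complex.exp ((θ : ℂ) * Complex.I))‖ ^ 2} = Φ '' Ico 0 1 := by
    ext x
    simp only [mem_ofPred_eq, mem_image]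
    refine exists_congr fun r => and_congr_right fun hr => ?_
    rw [eq_comm]
    refine Eq.congr_left (intervalIntegral.integral_congr fun θ _ => ?_)
    have hpr : p r θ = (r : ℂ) * Complex.exp ((θ : ℂ) * Complex.I) := by
      simp only [hp, min_eq_left hr.2.le, max_eq_right hr.1]
    have hb : (r : ℂ) * Complex.exp ((θ : ℂ) * Complex.I) ∈ ball (0 : ℂ) 1 := by
      simp [abs_of_nonneg hr.1, hr.2]
    simp only [hpr, hF hb, hG hb]
  have hbdd : BddAbove (Φ '' Ico 0 1) :=
    (isCompact_Icc.image hΦc).bddAbove.mono (image_mono Ico_subset_Icc_self)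
  have hone : Φ 1 ≤ sSup (Φ '' Ico 0 1) := by
    refine le_of_tendsto (hΦc.continuousWithinAt (s := Iio 1) (x := 1)).tendsto ?_
    filter_upwards [Ioo_mem_nhdsLT (show (0 : ℝ) < 1 by norm_num)] with r hr
    exact le_csSup hbdd ⟨r, ⟨hr.1.le, hr.2⟩, rfl⟩
  rw [H2distSq, hset]
  simpa [hΦ, hp] using hone

/-- The logarithm maps the disk into a horizontal strip; rotated and rescaled it yields a
holomorphic function with small real part whose value at `-1` is `π i`. -/
theorem exists_thin_phase {ε : ℝ} (hε : 0 < ε) :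
    ∃ v : ℂ → ℂ, DiffContOnCl ℂ v (ball 0 1) ∧ v 0 = 0 ∧ v (-1) = Real.pi * Complex.I ∧
      ∀ z ∈ closedBall (0 : ℂ) 1, |(v z).re| ≤ ε * (Real.pi / 2) := by
  set ρ : ℝ := 1 - Real.exp (-(Real.pi / ε)) with hρ
  have hρ1 : ρ < 1 := by have := Real.exp_pos (-(Real.pi / ε)); linarith
  have hρ0 : 0 ≤ ρ := by
    have : Real.exp (-(Real.pi / ε)) ≤ 1 :=
      Real.exp_le_one_iff.2 (neg_nonpos.2 (div_pos Real.pi_pos hε).le)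
    linarith
  have hre : ∀ z ∈ closedBall (0 : ℂ) 1, 0 < (1 + (ρ : ℂ) * z).re := by
    intro z hz
    have h1 : |z.re| ≤ 1 := (Complex.abs_re_le_norm z).trans (by simpa using hz)
    simp only [Complex.add_re, Complex.one_re, Complex.re_ofReal_mul]
    nlinarith [neg_le_of_abs_le h1]
  refine ⟨fun z => -(Complex.I * ε) * Complex.log (1 + ρ * z), ?_, by simp, ?_, ?_⟩
  · refine DifferentiableOn.diffContOnCl ?_
    rw [closure_ball _ one_ne_zero]
    intro z hz
    have : (1 + (ρ : ℂ) * z) ∈ Complex.slitPlane := Or.inl (hre z hz)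
    exact (((by fun_prop : DifferentiableAt ℂ (fun z : ℂ => 1 + (ρ : ℂ) * z) z).clog
      this).const_mul _).differentiableWithinAt
  · have h : (1 + (ρ : ℂ) * (-1)) = ((Real.exp (-(Real.pi / ε)) : ℝ) : ℂ) := by
      rw [hρ]; push_cast; ring
    simp only [h]
    rw [← Complex.ofReal_log (Real.exp_pos _).le, Real.log_exp]
    have : (ε : ℂ) ≠ 0 := by exact_mod_cast hε.ne'
    push_cast
    field_simp
  · intro z hz
    have : (-(Complex.I * ε) * Complex.log (1 + ρ * z)).re = ε * (1 + (ρ : ℂ) * z).arg := by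
      simp [Complex.mul_re, Complex.log_im]
    simp only [this, abs_mul, abs_of_pos hε]
    exact mul_le_mul_of_nonneg_left (Complex.abs_arg_le_pi_div_two_iff.2 (hre z hz).le) hε.le

/-- The normalized densities proportional to `exp (-2 N cos θ)` concentrate at `θ = π`. -/
theorem tendsto_integral_exp_cos_pow {h : ℝ → ℝ} (hh : Continuous h) :
    Tendsto (fun N : ℕ =>
      (∫ θ in Icc 0 (2 * Real.pi), Real.exp (-2 * Real.cos θ) ^ N)⁻¹ •
        ∫ θ in Icc 0 (2 * Real.pi), Real.exp (-2 * Real.cos θ) ^ N • h θ) atTop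
      (𝓝 (h Real.pi)) := by
  have hpi := Real.pi_pos
  refine tendsto_setIntegral_pow_smul_of_unique_maximum_of_isCompact_of_continuousOn isCompact_Icc
    (by fun_prop) ?_ (fun x _ => (Real.exp_pos _).le) (Real.exp_pos _) ?_ hh.continuousOn
  · intro y hy hne
    rw [Real.exp_lt_exp, Real.cos_pi]
    have hlt : -1 < Real.cos y := by
      refine lt_of_le_of_ne (Real.neg_one_le_cos y) fun hcos => hne ?_
      obtain ⟨k, hk⟩ := Real.cos_eq_neg_one_iff.1 hcos.symm
      have h1 : (-1 : ℝ) < k := by nlinarith [hy.1]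
      have h2 : (k : ℝ) < 1 := by nlinarith [hy.2]
      have h3 : k = 0 := by
        have : (-1 : ℤ) < k := by exact_mod_cast h1
        have : k < (1 : ℤ) := by exact_mod_cast h2
        omega
      simp [← hk, h3]
    linarith
  · rw [interior_Icc, closure_Ioo (by positivity)]
    constructor <;> linarith

/-- Densities close in `L¹`, with logarithms close in `L¹`, whose spectral factors are almost
antipodal. -/
theorem exists_densities {δ : ℝ} (hδ : 0 < δ) (hδ1 : δ ≤ 1) :
    ∃ f g : ℝ → ℝ,
      (∀ θ, 0 ≤ f θ) ∧ (∀ θ, 0 ≤ g θ) ∧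
      IntegrableOn f (Ico 0 (2 * Real.pi)) ∧
      IntegrableOn g (Ico 0 (2 * Real.pi)) ∧
      IntegrableOn (fun θ => Real.log (f θ)) (Ico 0 (2 * Real.pi)) ∧
      IntegrableOn (fun θ => Real.log (g θ)) (Ico 0 (2 * Real.pi)) ∧
      (∫ θ in Ico 0 (2 * Real.pi), |f θ|) ≤ 1 ∧
      (∫ θ in Ico 0 (2 * Real.pi), |g θ|) ≤ 1 ∧
      (∫ θ in Ico 0 (2 * Real.pi), |g θ - f θ|) ≤ δ ∧
      (∫ θ in Ico 0 (2 * Real.pi), |Real.log (g θ) - Real.log (f θ)|) ≤ δ ∧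
      2 - δ ≤ Real.sqrt (H2distSq (spectralFactor g) (spectralFactor f)) := by
  have hpi := Real.pi_pos
  have hpi3 := Real.pi_lt_d2
  set ε : ℝ := δ / 20 with hεdef
  have hε : 0 < ε := by positivity
  obtain ⟨v, hv, hv0, hvpi, hvre⟩ := exists_thin_phase hε
  set e : ℝ → ℂ := fun θ => Complex.exp ((θ : ℂ) * Complex.I) with he
  have hec : Continuous e := by simp only [he]; fun_prop
  have hemem : ∀ θ, e θ ∈ closedBall (0 : ℂ) 1 := fun θ => by
    simp [he, Complex.norm_exp_ofReal_mul_I]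
  have hvcl : ContinuousOn v (closedBall 0 1) := by
    simpa [closure_ball _ one_ne_zero] using hv.continuousOn
  have hvc : Continuous fun θ => v (e θ) := hvcl.comp_continuous hec hemem
  set h : ℝ → ℝ := fun θ => ‖Complex.exp (v (e θ)) - 1‖ ^ 2 with hh
  have hhc : Continuous h := ((Complex.continuous_exp.comp hvc).sub continuous_const).norm.pow 2
  have hhpi : h Real.pi = 4 := by
    have : e Real.pi = -1 := Complex.exp_pi_mul_I
    simp only [hh, this, hvpi, Complex.exp_pi_mul_I]
    norm_num
  have hlim := (tendsto_integral_exp_cos_pow hhc).const_mul (Real.exp (-(ε * Real.pi)))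
  rw [hhpi] at hlim
  have hbound : (2 - δ) ^ 2 < Real.exp (-(ε * Real.pi)) * 4 := by
    have := Real.add_one_le_exp (-(ε * Real.pi))
    nlinarith
  obtain ⟨N, hN⟩ := (hlim.eventually_const_lt hbound).exists
  set c : ℝ → ℝ := fun θ => Real.exp (-2 * Real.cos θ) ^ N with hc
  have hcc : Continuous c := by simp only [hc]; fun_prop
  set J : ℝ := ∫ θ in Icc 0 (2 * Real.pi), c θ with hJ
  have hJpos : 0 < J := by
    rw [hJ, integral_Icc_eq_integral_Ioc, ← intervalIntegral.integral_of_le (by positivity)]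
    exact intervalIntegral.intervalIntegral_pos_of_pos (hcc.intervalIntegrable _ _)
      (fun θ => pow_pos (Real.exp_pos _) _) (by positivity)
  set a : ℝ := (-(ε * Real.pi) - Real.log J) / 2 with ha
  have ha2 : Real.exp (2 * a) = Real.exp (-(ε * Real.pi)) * J⁻¹ := by
    rw [ha, mul_div_cancel₀ _ two_ne_zero, Real.exp_sub, Real.exp_log hJpos, div_eq_mul_inv]
  set u : ℂ → ℂ := fun z => a - N * z with hu
  have hud : Differentiable ℂ u := by simp only [hu]; fun_prop
  have hure : ∀ θ, Real.exp (2 * (u (e θ)).re) = Real.exp (2 * a) * c θ := by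
    intro θ
    simp only [hc]
    rw [← Real.exp_nat_mul, ← Real.exp_add]
    congr 1
    simp [hu, he, Complex.exp_ofReal_mul_I_re]
    ring
  set f : ℝ → ℝ := fun θ => Real.exp (2 * (u (e θ)).re) with hf
  set g : ℝ → ℝ := fun θ => Real.exp (2 * ((u + v) (e θ)).re) with hg
  have huc : Continuous fun θ => u (e θ) := hud.continuous.comp hec
  have hfc : Continuous f := by simp only [hf]; fun_prop
  have hvrec : Continuous fun θ => 2 * (v (e θ)).re :=
    continuous_const.mul (Complex.continuous_re.comp hvc)
  have hgc : Continuous g :=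
    Real.continuous_exp.comp (continuous_const.mul (Complex.continuous_re.comp (huc.add hvc)))
  have hint : ∀ {k : ℝ → ℝ}, Continuous k → IntegrableOn k (Ico 0 (2 * Real.pi)) := fun hk =>
    (hk.integrableOn_Icc).mono_set Ico_subset_Icc_self
  have hlogf : ∀ θ, Real.log (f θ) = 2 * (u (e θ)).re := fun θ => Real.log_exp _
  have hlogg : ∀ θ, Real.log (g θ) = 2 * (u (e θ)).re + 2 * (v (e θ)).re := fun θ => by
    rw [hg, Real.log_exp, Pi.add_apply, Complex.add_re, mul_add]
  have hgf : ∀ θ, g θ = f θ * Real.exp (2 * (v (e θ)).re) := fun θ => by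
    simp only [hf, hg]
    rw [← Real.exp_add, Pi.add_apply, Complex.add_re, mul_add]
  have hfpos : ∀ θ, 0 < f θ := fun θ => Real.exp_pos _
  have hgpos : ∀ θ, 0 < g θ := fun θ => Real.exp_pos _
  have hIcoIcc : ∀ k : ℝ → ℝ, ∫ θ in Ico 0 (2 * Real.pi), k θ = ∫ θ in Icc 0 (2 * Real.pi), k θ :=
    fun k => by rw [integral_Ico_eq_integral_Ioo, integral_Icc_eq_integral_Ioo]
  have hfint : ∫ θ in Ico 0 (2 * Real.pi), f θ = Real.exp (-(ε * Real.pi)) := by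
    rw [hIcoIcc, setIntegral_congr_fun measurableSet_Icc fun θ _ => hure θ, integral_const_mul, ha2,
      mul_assoc, ← hJ, inv_mul_cancel₀ hJpos.ne', mul_one]
  have hvb : ∀ θ, |2 * (v (e θ)).re| ≤ ε * Real.pi := fun θ => by
    have := hvre _ (hemem θ)
    rw [abs_mul, abs_two]; linarith
  have hεpi : 0 < ε * Real.pi := by positivity
  have hexp : Real.exp (-(ε * Real.pi)) * Real.exp (ε * Real.pi) = 1 := by
    rw [← Real.exp_add]; simp
  have hgle : ∀ θ, g θ ≤ f θ * Real.exp (ε * Real.pi) := fun θ => by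
    rw [hgf]
    exact mul_le_mul_of_nonneg_left (Real.exp_le_exp.2 (le_of_abs_le (hvb θ))) (hfpos θ).le
  have hdiff : ∀ θ, |g θ - f θ| ≤ f θ * (Real.exp (ε * Real.pi) - 1) := fun θ => by
    rw [hgf, show f θ * Real.exp (2 * (v (e θ)).re) - f θ =
      f θ * (Real.exp (2 * (v (e θ)).re) - 1) by ring, abs_mul, abs_of_pos (hfpos θ)]
    refine mul_le_mul_of_nonneg_left (abs_le.2 ⟨?_, ?_⟩) (hfpos θ).le
    · have h1 := Real.add_one_le_exp (2 * (v (e θ)).re)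
      have h2 := Real.add_one_le_exp (ε * Real.pi)
      have h3 := neg_le_of_abs_le (hvb θ)
      linarith
    · have := Real.exp_le_exp.2 (le_of_abs_le (hvb θ))
      linarith
  have hexple : 1 - Real.exp (-(ε * Real.pi)) ≤ δ := by
    have := Real.add_one_le_exp (-(ε * Real.pi))
    nlinarith
  refine ⟨f, g, fun θ => (hfpos θ).le, fun θ => (hgpos θ).le, hint hfc, hint hgc,
    ?_, ?_, ?_, ?_, ?_, ?_, ?_⟩
  · simp only [hlogf]; exact hint (by fun_prop)
  · simp only [hlogg]
    exact hint ((continuous_const.mul (Complex.continuous_re.comp huc)).add hvrec)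
  · simp only [abs_of_pos (hfpos _), hfint]
    exact Real.exp_le_one_iff.2 (by linarith)
  · simp only [abs_of_pos (hgpos _)]
    calc ∫ θ in Ico 0 (2 * Real.pi), g θ
        ≤ ∫ θ in Ico 0 (2 * Real.pi), f θ * Real.exp (ε * Real.pi) :=
          setIntegral_mono (hint hgc) (hint (by fun_prop)) hgle
      _ = 1 := by rw [integral_mul_const, hfint, hexp]
  · calc ∫ θ in Ico 0 (2 * Real.pi), |g θ - f θ|
        ≤ ∫ θ in Ico 0 (2 * Real.pi), f θ * (Real.exp (ε * Real.pi) - 1) :=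
          setIntegral_mono (hint (by fun_prop)) (hint (by fun_prop)) hdiff
      _ = 1 - Real.exp (-(ε * Real.pi)) := by rw [integral_mul_const, hfint, mul_sub, hexp, mul_one]
      _ ≤ δ := hexple
  · simp only [hlogf, hlogg, add_sub_cancel_left]
    calc ∫ θ in Ico 0 (2 * Real.pi), |2 * (v (e θ)).re|
        ≤ ∫ θ in Ico 0 (2 * Real.pi), ε * Real.pi :=
          setIntegral_mono (hint hvrec.abs) (hint continuous_const) hvb
      _ = 2 * Real.pi * (ε * Real.pi) := by
          simp [Measure.real, hpi.le]
      _ ≤ δ := by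
          have hsq : Real.pi ^ 2 ≤ 10 := by nlinarith
          rw [hεdef]
          nlinarith [mul_le_mul_of_nonneg_left hsq hδ.le]
  · refine Real.le_sqrt_of_sq_le (hN.le.trans ?_)
    have huvd : DiffContOnCl ℂ (u + v) (ball 0 1) := hud.diffContOnCl.add hv
    have hu0 : (u 0).im = 0 := by simp [hu]
    have huv0 : ((u + v) 0).im = 0 := by simp [hu0, hv0]
    refine le_trans (le_of_eq ?_) (le_H2distSq (A := fun z => Complex.exp ((u + v) z))
      (B := fun z => Complex.exp (u z)) ?_ ?_
      (fun w hw => spectralFactor_exp_re huvd huv0 hw)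
      (fun w hw => spectralFactor_exp_re hud.diffContOnCl hu0 hw))
    · rw [intervalIntegral.integral_of_le (by positivity), ← integral_Icc_eq_integral_Ioc,
        smul_eq_mul, ← mul_assoc, ← ha2, ← integral_const_mul]
      refine setIntegral_congr_fun measurableSet_Icc fun θ _ => ?_
      have h1 : ‖Complex.exp (u (e θ))‖ ^ 2 = Real.exp (2 * a) * c θ := by
        rw [Complex.norm_exp, ← hure, ← Real.exp_nat_mul]; norm_num
      change Real.exp (2 * a) * (c θ • h θ) =
        ‖Complex.exp (u (e θ) + v (e θ)) - Complex.exp (u (e θ))‖ ^ 2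
      rw [Complex.exp_add, ← mul_sub_one, norm_mul, mul_pow, h1, smul_eq_mul, mul_assoc]
    · exact Complex.continuous_exp.comp_continuousOn (hud.continuous.continuousOn.add hvcl)
    · exact (Complex.continuous_exp.comp hud.continuous).continuousOn

/-- Theorem 1 (negative result): there are nonnegative densities `f_n, g_n`
with `‖f_n‖₁, ‖g_n‖₁ ≤ 1`, `‖g_n − f_n‖₁ ≤ 1/n`, `‖log g_n − log f_n‖₁ ≤ 1/n`,
but `‖g_n⁺ − f_n⁺‖_{H²} ≥ 2 − 1/n`; consequently no modulus of continuity
`Π(s,t) → 0` as `(s,t) → (0,0)` controls `‖g⁺ − f⁺‖²_{H²}` in terms of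
`‖g − f‖₁` and `‖log g − log f‖₁` for all densities of `L¹` norm at most 1. -/
theorem stmt14 :
    (∃ f g : ℕ → ℝ → ℝ, ∀ n : ℕ, 0 < n →
      (∀ θ, 0 ≤ f n θ) ∧ (∀ θ, 0 ≤ g n θ) ∧
      IntegrableOn (f n) (Ico 0 (2 * Real.pi)) ∧
      IntegrableOn (g n) (Ico 0 (2 * Real.pi)) ∧
      IntegrableOn (fun θ => Real.log (f n θ)) (Ico 0 (2 * Real.pi)) ∧
      IntegrableOn (fun θ => Real.log (g n θ)) (Ico 0 (2 * Real.pi)) ∧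
      (∫ θ in Ico 0 (2 * Real.pi), |f n θ|) ≤ 1 ∧
      (∫ θ in Ico 0 (2 * Real.pi), |g n θ|) ≤ 1 ∧
      (∫ θ in Ico 0 (2 * Real.pi), |g n θ - f n θ|) ≤ 1 / (n : ℝ) ∧
      (∫ θ in Ico 0 (2 * Real.pi), |Real.log (g n θ) - Real.log (f n θ)|) ≤ 1 / (n : ℝ) ∧
      2 - 1 / (n : ℝ) ≤
        Real.sqrt (H2distSq (spectralFactor (g n)) (spectralFactor (f n)))) ∧
    ¬ ∃ Pi : ℝ → ℝ → ℝ,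
      Tendsto (fun p : ℝ × ℝ => Pi p.1 p.2)
        (nhdsWithin (0, 0) (Ici 0 ×ˢ Ici 0)) (nhds 0) ∧
      ∀ f g : ℝ → ℝ, (∀ θ, 0 ≤ f θ) → (∀ θ, 0 ≤ g θ) →
        IntegrableOn f (Ico 0 (2 * Real.pi)) →
        IntegrableOn g (Ico 0 (2 * Real.pi)) →
        IntegrableOn (fun θ => Real.log (f θ)) (Ico 0 (2 * Real.pi)) →
        IntegrableOn (fun θ => Real.log (g θ)) (Ico 0 (2 * Real.pi)) →
        (∫ θ in Ico 0 (2 * Real.pi), |f θ|) ≤ 1 →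
        (∫ θ in Ico 0 (2 * Real.pi), |g θ|) ≤ 1 →
        H2distSq (spectralFactor (g)) (spectralFactor (f)) ≤
          Pi (∫ θ in Ico 0 (2 * Real.pi), |g θ - f θ|)
            (∫ θ in Ico 0 (2 * Real.pi), |Real.log (g θ) - Real.log (f θ)|) := by
  have hseq : ∀ n : ℕ, ∃ f g : ℝ → ℝ, 0 < n →
      (∀ θ, 0 ≤ f θ) ∧ (∀ θ, 0 ≤ g θ) ∧
      IntegrableOn f (Ico 0 (2 * Real.pi)) ∧
      IntegrableOn g (Ico 0 (2 * Real.pi)) ∧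
      IntegrableOn (fun θ => Real.log (f θ)) (Ico 0 (2 * Real.pi)) ∧
      IntegrableOn (fun θ => Real.log (g θ)) (Ico 0 (2 * Real.pi)) ∧
      (∫ θ in Ico 0 (2 * Real.pi), |f θ|) ≤ 1 ∧
      (∫ θ in Ico 0 (2 * Real.pi), |g θ|) ≤ 1 ∧
      (∫ θ in Ico 0 (2 * Real.pi), |g θ - f θ|) ≤ 1 / (n : ℝ) ∧
      (∫ θ in Ico 0 (2 * Real.pi), |Real.log (g θ) - Real.log (f θ)|) ≤ 1 / (n : ℝ) ∧
      2 - 1 / (n : ℝ) ≤ Real.sqrt (H2distSq (spectralFactor g) (spectralFactor f)) := by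
    intro n
    rcases Nat.eq_zero_or_pos n with rfl | hn
    · exact ⟨0, 0, fun h => absurd h (lt_irrefl 0)⟩
    · have hn1 : (1 : ℝ) ≤ n := by exact_mod_cast hn
      obtain ⟨f, g, h⟩ := exists_densities (δ := 1 / (n : ℝ)) (by positivity)
        ((div_le_one (by positivity)).2 hn1)
      exact ⟨f, g, fun _ => h⟩
  choose f g hfg using hseq
  refine ⟨⟨f, g, hfg⟩, ?_⟩
  rintro ⟨Pi, hPi, hbound⟩
  have hto : Tendsto (fun n : ℕ => ((∫ θ in Ico 0 (2 * Real.pi), |g n θ - f n θ|),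
      ∫ θ in Ico 0 (2 * Real.pi), |Real.log (g n θ) - Real.log (f n θ)|)) atTop
      (nhdsWithin (0, 0) (Ici 0 ×ˢ Ici 0)) := by
    have hnn : ∀ k : ℝ → ℝ, 0 ≤ ∫ θ in Ico 0 (2 * Real.pi), |k θ| := fun k =>
      integral_nonneg fun θ => abs_nonneg _
    refine tendsto_nhdsWithin_iff.2 ⟨Tendsto.prodMk_nhds ?_ ?_, ?_⟩
    · refine squeeze_zero' (Eventually.of_forall fun n => hnn _) ?_
        tendsto_one_div_atTop_nhds_zero_nat
      filter_upwards [eventually_gt_atTop 0] with n hn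
      exact (hfg n hn).2.2.2.2.2.2.2.2.1
    · refine squeeze_zero' (Eventually.of_forall fun n => hnn _) ?_
        tendsto_one_div_atTop_nhds_zero_nat
      filter_upwards [eventually_gt_atTop 0] with n hn
      exact (hfg n hn).2.2.2.2.2.2.2.2.2.1
    · exact Eventually.of_forall fun n => ⟨hnn _, hnn _⟩
  have hlt := (hPi.comp hto).eventually_lt_const (show (0 : ℝ) < 1 by norm_num)
  obtain ⟨n, hsmall, hn⟩ := (hlt.and (eventually_gt_atTop 0)).exists
  obtain ⟨hf0, hg0, hfi, hgi, hlf, hlg, hf1, hg1, -, -, hbig⟩ := hfg n hn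
  have hle := hbound (f n) (g n) hf0 hg0 hfi hgi hlf hlg hf1 hg1
  have hn1 : 1 / (n : ℝ) ≤ 1 := (div_le_one (by positivity)).2 (by exact_mod_cast hn)
  have hone : 1 ≤ H2distSq (spectralFactor (g n)) (spectralFactor (f n)) :=
    Real.one_le_sqrt.1 (by linarith)
  exact absurd hsmall (not_lt.2 (hone.trans hle))
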